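/- Let p and q be nonzero real numbers. The inequality (2/3)·(sin(x)/x)^p + (1/3)·(tan(x)/x)^p > 1 holds for every x ∈ (0, π/2) if and only if p > 0 or p ≤ −(ln 3 − ln 2)/(ln π − ln 2); and the inequality (2/3)·(sin(x)/x)^q + (1/3)·(tan(x)/x)^q < 1 holds for every x ∈ (0, π/2) if and only if −4/5 ≤ q < 0. -/

import Mathlib

open Real Set

lemma hu_mvt {f g : ℝ → ℝ} {a b : ℝ} (hab : a < b) (hf : ContinuousOn f (Icc a b))
    (hd : ∀ x ∈ Ioo a b, ∃ k > 0, HasDerivAt f (k * g x) x) :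
    ∃ c ∈ Ioo a b, ∃ k > 0, f b - f a = k * g c := by
  obtain ⟨c, hc, h⟩ := exists_deriv_eq_slope f hab hf
    (fun x hx => by
      obtain ⟨k, _, h⟩ := hd x hx
      exact h.differentiableAt.differentiableWithinAt)
  obtain ⟨k, hk, h'⟩ := hd c hc
  have hba : 0 < b - a := sub_pos.2 hab
  refine ⟨c, hc, k * (b - a), by positivity, ?_⟩
  rw [h'.deriv, eq_div_iff hba.ne'] at h
  linarith

noncomputable def huM (r c : ℝ) : ℝ := 2 * (2 - r) - r * c ^ (2 * r - 2) - 2 * r * c ^ r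
noncomputable def huN (r c : ℝ) : ℝ := 2 * c ^ (2 - r) - c ^ r - r * c ^ 2 + r - 1
noncomputable def huH (r x : ℝ) : ℝ :=
  sin x * cos x * (2 + cos x ^ r) / (cos x ^ r + 2 * cos x ^ 2) - x
noncomputable def huF (r x : ℝ) : ℝ := -r * log (sinc x) + log (2 + cos x ^ r)

lemma huM_conc {r a b c : ℝ} (hr : 0 < r) (ha : 0 < a) (hab : a < b) (hbc : b < c)
    (h1 : 0 < huM r a) (h2 : 0 ≤ huM r c) : 0 < huM r b := by
  have hb := ha.trans hab
  have hc := hb.trans hbc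
  have l1 := log_lt_log ha hab
  have l2 := log_lt_log hb hbc
  set A := log a
  set B := log b
  set C := log c
  have key : ∀ s : ℝ, (C - A) * exp (B * s) ≤ (C - B) * exp (A * s) + (B - A) * exp (C * s) := by
    intro s
    have hCA : 0 < C - A := by linarith
    have := convexOn_exp.2 (mem_univ (A * s)) (mem_univ (C * s))
      (div_nonneg (by linarith) hCA.le : 0 ≤ (C - B) / (C - A))
      (div_nonneg (by linarith) hCA.le : 0 ≤ (B - A) / (C - A)) (by field_simp; ring)
    simp only [smul_eq_mul] at this
    have e : (C - B) / (C - A) * (A * s) + (B - A) / (C - A) * (C * s) = B * s := by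
      field_simp; ring
    rw [e] at this
    have h3 := mul_le_mul_of_nonneg_left this hCA.le
    refine h3.trans (le_of_eq ?_)
    field_simp
  unfold huM at *
  rw [rpow_def_of_pos ha, rpow_def_of_pos ha] at h1
  rw [rpow_def_of_pos hc, rpow_def_of_pos hc] at h2
  rw [rpow_def_of_pos hb, rpow_def_of_pos hb]
  have k1 := mul_le_mul_of_nonneg_left (key (2 * r - 2)) hr.le
  have k2 := mul_le_mul_of_nonneg_left (key r) hr.le
  have m1 := mul_pos (sub_pos.2 l2) h1
  have m2 := mul_nonneg (sub_pos.2 l1).le h2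
  have : 0 < (C - A) * (2 * (2 - r) - r * exp (B * (2 * r - 2)) - 2 * r * exp (B * r)) := by
    linarith
  exact pos_of_mul_pos_right this (by linarith)

lemma huN_deriv {r c : ℝ} (hc : 0 < c) : ∃ k > 0, HasDerivAt (huN r) (k * huM r c) c := by
  refine ⟨c ^ (1 - r), by positivity, ?_⟩
  have h1 := (hasDerivAt_rpow_const (x := c) (p := 2 - r) (Or.inl hc.ne')).const_mul 2
  have h2 := hasDerivAt_rpow_const (x := c) (p := r) (Or.inl hc.ne')
  have h3 := (hasDerivAt_pow 2 c).const_mul r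
  have := (((h1.sub h2).sub h3).add_const r).sub_const 1
  refine HasDerivAt.congr_deriv (f := huN r) this ?_
  unfold huM
  have e1 : c ^ (2 - r - 1) = c ^ (1 - r) := by congr 1; ring
  have e2 : c ^ (r - 1) = c ^ (1 - r) * c ^ (2 * r - 2) := by
    rw [← rpow_add hc]; congr 1; ring
  have e3 : c ^ (1 - r) * c ^ r = c := by
    rw [← rpow_add hc]; simp
  rw [e1, e2]
  norm_num
  linear_combination (2 * r) * e3

lemma huN_cont {r : ℝ} (hr : 0 < r) (hr2 : r < 1) : Continuous (huN r) := by
  unfold huN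
  have h1 : Continuous fun c : ℝ => c ^ (2 - r) := continuous_id.rpow_const (fun _ => Or.inr (by linarith))
  have h2 : Continuous fun c : ℝ => c ^ r := continuous_id.rpow_const (fun _ => Or.inr (by linarith))
  fun_prop

lemma huN_one (r : ℝ) : huN r 1 = 0 := by simp [huN]; norm_num
lemma huN_zero {r : ℝ} (hr : 0 < r) (hr2 : r < 1) : huN r 0 < 0 := by
  have : (2 - r) ≠ 0 := by linarith
  simp [huN, zero_rpow this, zero_rpow hr.ne']; linarith

lemma huN_mvt {r a b : ℝ} (hr : 0 < r) (hr2 : r < 1) (ha : 0 ≤ a) (hab : a < b) :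
    ∃ c ∈ Ioo a b, ∃ k > 0, huN r b - huN r a = k * huM r c :=
  hu_mvt hab (huN_cont hr hr2).continuousOn (fun _ hx => huN_deriv (ha.trans_lt hx.1))

/-- the sign change pattern of `huN` -/
lemma huN_pattern {r a b : ℝ} (hr : 0 < r) (hr2 : r < 1) (ha : 0 < a) (hab : a < b) (hb : b < 1)
    (h : huN r b ≤ 0) : huN r a < 0 := by
  by_contra! h'
  obtain ⟨c1, i1, k1, p1, e1⟩ := huN_mvt hr hr2 le_rfl ha
  obtain ⟨c2, i2, k2, p2, e2⟩ := huN_mvt hr hr2 ha.le hab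
  obtain ⟨c3, i3, k3, p3, e3⟩ := huN_mvt hr hr2 (ha.trans hab).le hb
  have z := huN_zero hr hr2
  have o := huN_one r
  have q1 : 0 < huM r c1 := pos_of_mul_pos_right (by rw [← e1]; linarith) p1.le
  have q3 : 0 ≤ huM r c3 := nonneg_of_mul_nonneg_right (by rw [← e3]; linarith) p3
  have := mul_pos p2 (huM_conc hr i1.1 (i1.2.trans i2.1) (i2.2.trans i3.1) q1 q3)
  linarith

lemma huN_neg {r a : ℝ} (hr : 0 < r) (hr2 : r ≤ 4 / 5) (ha : 0 < a) (ha1 : a < 1) :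
    huN r a < 0 := by
  by_contra! h'
  have hr1 : r < 1 := by linarith
  obtain ⟨c1, i1, k1, p1, e1⟩ := huN_mvt hr hr1 le_rfl ha
  obtain ⟨c2, i2, k2, p2, e2⟩ := huN_mvt hr hr1 ha.le ha1
  have z := huN_zero hr hr1
  have o := huN_one r
  have q1 : 0 < huM r c1 := pos_of_mul_pos_right (by rw [← e1]; linarith) p1.le
  have q3 : 0 ≤ huM r 1 := by simp [huM]; linarith
  have := mul_pos p2 (huM_conc hr i1.1 (i1.2.trans i2.1) i2.2 q1 q3)
  linarith

lemma huN_pos {r : ℝ} (hr : 4 / 5 < r) : ∃ e, 0 < e ∧ e < 1 ∧ ∀ c, e < c → c < 1 → 0 < huN r c := by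
  have hc : ContinuousAt (huM r) 1 := by
    unfold huM
    have h1 : ContinuousAt (fun c : ℝ => c ^ (2 * r - 2)) 1 := continuousAt_rpow_const _ _ (by simp)
    have h2 : ContinuousAt (fun c : ℝ => c ^ r) 1 := continuousAt_rpow_const _ _ (by simp)
    fun_prop
  have h1 : huM r 1 < 0 := by simp [huM]; linarith
  obtain ⟨d, hd, hd'⟩ := Metric.eventually_nhds_iff.1 (hc.eventually_lt_const h1)
  refine ⟨max (1 / 2) (1 - d), by positivity, by simp [hd]; norm_num, fun c h h' => ?_⟩
  have hh := max_lt_iff.1 h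
  have hc0 : 0 < c := by linarith [hh.1]
  obtain ⟨c2, i2, k2, p2, e2⟩ := hu_mvt (f := huN r) (g := huM r) h'
    (fun x hx => by
      obtain ⟨k, _, h⟩ := huN_deriv (r := r) (hc0.trans_le hx.1)
      exact h.continuousAt.continuousWithinAt) (fun _ hx => huN_deriv (hc0.trans hx.1))
  have : huM r c2 < 0 := hd' (by
    rw [Real.dist_eq, abs_lt]; constructor <;> linarith [hh.2, i2.1, i2.2])
  have := mul_neg_of_pos_of_neg p2 this
  linarith [huN_one r]

lemma hu_cos_pos {x : ℝ} (h0 : 0 ≤ x) (h1 : x < π / 2) : 0 < cos x :=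
  cos_pos_of_mem_Ioo ⟨by linarith [pi_pos], h1⟩
lemma hu_cos_lt {x : ℝ} (h0 : 0 < x) (h1 : x < π / 2) : cos x < 1 := by
  rw [← cos_zero]; exact cos_lt_cos_of_nonneg_of_le_pi le_rfl (by linarith) h0
lemma hu_sin_pos {x : ℝ} (h0 : 0 < x) (h1 : x ≤ π / 2) : 0 < sin x :=
  sin_pos_of_pos_of_lt_pi h0 (by linarith [pi_pos])

lemma huH_deriv {r x : ℝ} (h0 : 0 ≤ x) (h1 : x < π / 2) :
    HasDerivAt (huH r) (2 * (sin x) ^ 2 * (cos x ^ r) / (cos x ^ r + 2 * cos x ^ 2) ^ 2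
      * huN r (cos x)) x := by
  have hc := hu_cos_pos h0 h1
  have hw : 0 < cos x ^ r := by positivity
  have hD : 0 < cos x ^ r + 2 * cos x ^ 2 := by positivity
  have d1 := (hasDerivAt_cos x).rpow_const (p := r) (Or.inl hc.ne')
  have d2 := (((hasDerivAt_sin x).mul (hasDerivAt_cos x)).mul (d1.const_add 2)).div
    (d1.add (((hasDerivAt_cos x).pow 2).const_mul 2)) hD.ne'
  have d3 := d2.sub (hasDerivAt_id x)
  refine HasDerivAt.congr_deriv (f := huH r) d3 ?_
  have e1 : cos x ^ (r - 1) = cos x ^ r / cos x := by rw [rpow_sub hc, rpow_one]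
  have e2 : cos x ^ (2 - r) = cos x ^ 2 / cos x ^ r := by rw [rpow_sub hc]; norm_num
  simp only [huN, Pi.mul_apply, Pi.add_apply, Pi.pow_apply]
  rw [e1, e2]
  have hs : sin x ^ 2 = 1 - cos x ^ 2 := by linarith [sin_sq_add_cos_sq x]
  generalize cos x ^ r = w at *
  generalize cos x = c at *
  generalize sin x = s at *
  have hs3 : s ^ 3 = s * (1 - c ^ 2) := by rw [← hs]; ring
  have hs4 : s ^ 4 = (1 - c ^ 2) ^ 2 := by rw [← hs]; ring
  field_simp
  ring_nf
  simp only [hs, hs3, hs4]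
  ring

lemma huH_mvt {r a b : ℝ} (ha : 0 ≤ a) (hab : a < b) (hb : b < π / 2) :
    ∃ c ∈ Ioo a b, ∃ k > 0, huH r b - huH r a = k * huN r (cos c) :=
  hu_mvt (g := fun c => huN r (cos c)) hab
    (fun x hx => (huH_deriv (ha.trans hx.1)
      (hx.2.trans_lt hb)).continuousAt.continuousWithinAt) (fun x hx => by
      have h0 := ha.trans_lt hx.1
      have h1 := hx.2.trans hb
      have := hu_cos_pos h0.le h1
      have := hu_sin_pos h0 h1.le
      exact ⟨_, by positivity, huH_deriv h0.le h1⟩)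

lemma huH_zero (r : ℝ) : huH r 0 = 0 := by simp [huH]

lemma huH_neg {r x : ℝ} (hr : 0 < r) (hr2 : r ≤ 4 / 5) (h0 : 0 < x) (h1 : x < π / 2) :
    huH r x < 0 := by
  obtain ⟨c, i, k, p, e⟩ := huH_mvt (r := r) le_rfl h0 h1
  have h2 := i.2.trans h1
  have := mul_neg_of_pos_of_neg p (huN_neg hr hr2 (hu_cos_pos i.1.le h2) (hu_cos_lt i.1 h2))
  linarith [huH_zero r]

lemma huH_pattern {r x y : ℝ} (hr : 0 < r) (hr2 : r < 1) (h0 : 0 < x) (hxy : x < y)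
    (h1 : y < π / 2) (h : huH r x ≤ 0) : huH r y < 0 := by
  obtain ⟨c, i, k, p, e⟩ := huH_mvt (r := r) le_rfl h0 (hxy.trans h1)
  obtain ⟨c', i', k', p', e'⟩ := huH_mvt (r := r) h0.le hxy h1
  have h2 : huN r (cos c) ≤ 0 := by
    by_contra! hh
    have := mul_pos p hh
    linarith [huH_zero r]
  have hc' : c' < π / 2 := i'.2.trans h1
  have hcc : c < c' := i.2.trans i'.1
  have h3 := huN_pattern hr hr2 (hu_cos_pos (i.1.trans hcc).le hc')
    (cos_lt_cos_of_nonneg_of_le_pi i.1.le (by linarith) hcc) (hu_cos_lt i.1 (hcc.trans hc')) h2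
  have := mul_neg_of_pos_of_neg p' h3
  linarith

lemma hu_sinc_pos {x : ℝ} (h0 : 0 ≤ x) (h1 : x ≤ π / 2) : 0 < sinc x := by
  rcases h0.eq_or_lt with rfl | h0
  · simp
  · rw [sinc_of_ne_zero h0.ne']
    exact div_pos (hu_sin_pos h0 h1) h0

lemma huF_cont {r : ℝ} (hr : 0 < r) : ContinuousOn (huF r) (Icc 0 (π / 2)) := by
  unfold huF
  refine ContinuousOn.add ?_ ?_
  · exact continuousOn_const.mul (continuous_sinc.continuousOn.log
      (fun x hx => (hu_sinc_pos hx.1 hx.2).ne'))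
  · refine ContinuousOn.log ?_ ?_
    · exact continuousOn_const.add (continuous_cos.continuousOn.rpow_const (fun _ _ => Or.inr hr.le))
    · intro x hx
      have : 0 ≤ cos x := cos_nonneg_of_mem_Icc ⟨by linarith [hx.1, pi_pos], hx.2⟩
      positivity

lemma huF_deriv {r x : ℝ} (h0 : 0 < x) (h1 : x < π / 2) :
    HasDerivAt (huF r) (r * (cos x ^ r + 2 * cos x ^ 2) / (x * sin x * cos x * (2 + cos x ^ r))
      * huH r x) x := by
  have hc := hu_cos_pos h0.le h1
  have hsp := hu_sin_pos h0 h1.le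
  have hw : 0 < cos x ^ r := by positivity
  have hD : 0 < cos x ^ r + 2 * cos x ^ 2 := by positivity
  have d1 := (hasDerivAt_cos x).rpow_const (p := r) (Or.inl hc.ne')
  have d2 := (d1.const_add 2).log (by positivity)
  have d3 := (((hasDerivAt_sin x).div (hasDerivAt_id x) h0.ne').log
    (by simpa using ⟨hsp.ne', h0.ne'⟩)).const_mul (-r)
  have d4 := d3.add d2
  have e1 : cos x ^ (r - 1) = cos x ^ r / cos x := by rw [rpow_sub hc, rpow_one]
  refine HasDerivAt.congr_of_eventuallyEq (f := fun x => -r * log (sin x / x) + log (2 + cos x ^ r))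
    ?_ ?_
  · refine HasDerivAt.congr_deriv d4 ?_
    simp only [huH, Pi.div_apply, id]
    rw [e1]
    have hs : sin x ^ 2 = 1 - cos x ^ 2 := by linarith [sin_sq_add_cos_sq x]
    generalize cos x ^ r = w at *
    generalize cos x = c at *
    generalize sin x = s at *
    field_simp
    ring_nf
    simp only [hs]
    ring
  · filter_upwards [eventually_ne_nhds h0.ne'] with y hy
    simp [huF, sinc_of_ne_zero hy]

lemma huF_mvt {r a b : ℝ} (hr : 0 < r) (ha : 0 ≤ a) (hab : a < b) (hb : b ≤ π / 2) :
    ∃ c ∈ Ioo a b, ∃ k > 0, huF r b - huF r a = k * huH r c :=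
  hu_mvt hab ((huF_cont hr).mono (Icc_subset_Icc ha hb)) (fun x hx => by
      have h0 := ha.trans_lt hx.1
      have h1 := hx.2.trans_le hb
      have := hu_cos_pos h0.le h1
      have := hu_sin_pos h0 h1.le
      exact ⟨_, by positivity, huF_deriv h0 h1⟩)

lemma huF_zero (r : ℝ) : huF r 0 = log 3 := by simp [huF]; norm_num

lemma huF_end {r : ℝ} (hr : 0 < r) : huF r (π / 2) = r * (log π - log 2) + log 2 := by
  have : sinc (π / 2) = 2 / π := by
    rw [sinc_of_ne_zero (by positivity)]; simp
  simp [huF, this, zero_rpow hr.ne']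
  rw [log_div (by norm_num) pi_ne_zero]
  ring

lemma huF_lt {r x : ℝ} (hr : 0 < r) (hr2 : r ≤ 4 / 5) (h0 : 0 < x) (h1 : x < π / 2) :
    huF r x < log 3 := by
  obtain ⟨c, i, k, p, e⟩ := huF_mvt hr le_rfl h0 h1.le
  have := mul_neg_of_pos_of_neg p (huH_neg hr hr2 i.1 (i.2.trans h1))
  linarith [huF_zero r]

lemma huF_gt {r x : ℝ} (hr : 0 < r) (hr2 : r < 1) (hend : log 3 ≤ huF r (π / 2))
    (h0 : 0 < x) (h1 : x < π / 2) : log 3 < huF r x := by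
  by_contra! h
  obtain ⟨c, i, k, p, e⟩ := huF_mvt hr le_rfl h0 h1.le
  obtain ⟨c', i', k', p', e'⟩ := huF_mvt hr h0.le h1 le_rfl
  have h2 : huH r c ≤ 0 := by
    by_contra! hh
    have := mul_pos p hh
    linarith [huF_zero r]
  have := mul_neg_of_pos_of_neg p' (huH_pattern hr hr2 i.1 (i.2.trans i'.1) i'.2 h2)
  linarith

lemma huF_gt_ex {r : ℝ} (hr : 4 / 5 < r) : ∃ x, 0 < x ∧ x < π / 2 ∧ log 3 < huF r x := by
  have hr0 : 0 < r := by linarith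
  obtain ⟨e, he0, he1, he⟩ := huN_pos hr
  have hx0 : 0 < arccos e := arccos_pos.2 he1
  have hx1 : arccos e < π / 2 := arccos_lt_pi_div_two.2 he0
  refine ⟨arccos e, hx0, hx1, ?_⟩
  obtain ⟨c, i, k, p, eq⟩ := huF_mvt hr0 le_rfl hx0 hx1.le
  obtain ⟨c', i', k', p', eq'⟩ := huH_mvt (r := r) le_rfl i.1 (i.2.trans hx1)
  have hc' := i'.2.trans i.2
  have : e < cos c' := by
    rw [← cos_arccos (by linarith : -1 ≤ e) he1.le]
    exact cos_lt_cos_of_nonneg_of_le_pi i'.1.le (by linarith) hc'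
  have h3 := mul_pos p' (he _ this (hu_cos_lt i'.1 (hc'.trans hx1)))
  rw [← eq', huH_zero, sub_zero] at h3
  have := mul_pos p h3
  linarith [huF_zero r]

lemma hu_expr {r x : ℝ} (h0 : 0 < x) (h1 : x < π / 2) :
    2 / 3 * (sin x / x) ^ (-r) + 1 / 3 * (tan x / x) ^ (-r) = exp (huF r x - log 3) := by
  have hc := hu_cos_pos h0.le h1
  have hs := hu_sin_pos h0 h1.le
  have hA : 0 < sin x / x := by positivity
  have e : tan x / x = (sin x / x) * (cos x)⁻¹ := by rw [tan_eq_sin_div_cos]; ring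
  rw [e, mul_rpow hA.le (by positivity), exp_sub, exp_log (by norm_num), huF, exp_add,
    exp_log (by positivity), sinc_of_ne_zero h0.ne', inv_rpow hc.le, ← rpow_neg hc.le, neg_neg,
    mul_comm (-r), ← rpow_def_of_pos hA]
  ring

lemma hu_pos {p x : ℝ} (hp : 0 < p) (h0 : 0 < x) (h1 : x < π / 2) :
    1 < 2 / 3 * (sin x / x) ^ p + 1 / 3 * (tan x / x) ^ p := by
  have hA : 0 < sin x / x := div_pos (hu_sin_pos h0 h1.le) h0
  have hB : 0 < tan x / x := div_pos (tan_pos_of_pos_of_lt_pi_div_two h0 h1) h0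
  have h := hu_expr (r := 1 / 2) h0 h1
  have h2 : exp (huF (1 / 2) x - log 3) < 1 := by
    rw [exp_lt_one_iff]
    linarith [huF_lt (r := 1 / 2) (by norm_num) (by norm_num) h0 h1]
  rw [← h, rpow_def_of_pos hA, rpow_def_of_pos hB] at h2
  rw [rpow_def_of_pos hA, rpow_def_of_pos hB]
  have a1 := add_one_le_exp (log (sin x / x) * -(1 / 2))
  have a2 := add_one_le_exp (log (tan x / x) * -(1 / 2))
  have a3 := add_one_le_exp (log (sin x / x) * p)
  have a4 := add_one_le_exp (log (tan x / x) * p)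
  have : 0 < 2 * log (sin x / x) + log (tan x / x) := by linarith
  have := mul_pos this hp
  linarith

theorem huygens_trig (p q : ℝ) (hp : p ≠ 0) (hq : q ≠ 0) :
    ((∀ x ∈ Ioo (0 : ℝ) (π / 2),
        2 / 3 * (sin x / x) ^ p + 1 / 3 * (tan x / x) ^ p > 1) ↔
      (0 < p ∨ p ≤ -((Real.log 3 - Real.log 2) / (Real.log π - Real.log 2)))) ∧
    ((∀ x ∈ Ioo (0 : ℝ) (π / 2),
        2 / 3 * (sin x / x) ^ q + 1 / 3 * (tan x / x) ^ q < 1) ↔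
      (-(4 / 5) ≤ q ∧ q < 0)) := by
  have L32 : 0 < log 3 - log 2 := sub_pos.2 (log_lt_log (by norm_num) (by norm_num))
  have Lp3 : log 3 < log π := log_lt_log (by norm_num) pi_gt_three
  have Lp2 : 0 < log π - log 2 := by linarith
  refine ⟨⟨fun h => ?_, ?_⟩, ⟨fun h => ?_, ?_⟩⟩
  · by_contra! hh
    have hp0 : p < 0 := lt_of_le_of_ne hh.1 hp
    obtain ⟨r, rfl⟩ : ∃ r, p = -r := ⟨-p, by ring⟩
    have hr : 0 < r := by linarith
    have hlt : huF r (π / 2) < log 3 := by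
      rw [huF_end hr]
      have := neg_lt_neg_iff.1 hh.2
      rw [lt_div_iff₀ Lp2] at this
      linarith
    have hpi : 0 < π / 2 := by positivity
    have hcont : ContinuousWithinAt (huF r) (Ioo 0 (π / 2)) (π / 2) :=
      ((huF_cont hr) (π / 2) ⟨hpi.le, le_rfl⟩).mono Ioo_subset_Icc_self
    have hne : (nhdsWithin (π / 2) (Ioo 0 (π / 2))).NeBot := by
      rw [nhdsWithin_Ioo_eq_nhdsLT hpi]; infer_instance
    obtain ⟨x, hx1, hx2⟩ := ((hcont.eventually_lt_const hlt).and self_mem_nhdsWithin).exists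
    have := h x hx2
    rw [hu_expr hx2.1 hx2.2, gt_iff_lt, one_lt_exp_iff] at this
    linarith
  · rintro (h | h) x ⟨h0, h1⟩
    · exact hu_pos h h0 h1
    · set r := (log 3 - log 2) / (log π - log 2) with hr
      have hr0 : 0 < r := div_pos L32 Lp2
      have hr1 : r < 1 := by rw [hr, div_lt_one Lp2]; linarith
      have hend : log 3 ≤ huF r (π / 2) := by
        rw [huF_end hr0, hr, div_mul_cancel₀ _ Lp2.ne']; linarith
      have hF := huF_gt hr0 hr1 hend h0 h1
      have h2 : 1 < exp (huF r x - log 3) := by rw [one_lt_exp_iff]; linarith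
      rw [← hu_expr h0 h1] at h2
      have hA : 0 < sin x / x := div_pos (hu_sin_pos h0 h1.le) h0
      have hB : 0 < tan x / x := div_pos (tan_pos_of_pos_of_lt_pi_div_two h0 h1) h0
      have ha : 1 ≤ p / (-r) := by rw [le_div_iff_of_neg (by linarith)]; linarith
      have h3 := Real.one_lt_rpow h2 (by linarith : 0 < p / (-r))
      have h4 := (convexOn_rpow ha).2
        (mem_Ici.2 (by positivity : 0 ≤ (sin x / x) ^ (-r)))
        (mem_Ici.2 (by positivity : 0 ≤ (tan x / x) ^ (-r)))
        (by norm_num : (0 : ℝ) ≤ 2 / 3) (by norm_num : (0 : ℝ) ≤ 1 / 3) (by norm_num)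
      simp only [smul_eq_mul] at h4
      rw [← rpow_mul hA.le, ← rpow_mul hB.le, mul_div_cancel₀ p (by linarith : (-r) ≠ 0)] at h4
      exact h3.trans_le h4
  · have hx : π / 4 ∈ Ioo (0 : ℝ) (π / 2) := ⟨by positivity, by linarith [pi_pos]⟩
    have hq0 : q < 0 := by
      by_contra! hh
      have := h _ hx
      have := hu_pos (lt_of_le_of_ne hh hq.symm) hx.1 hx.2
      linarith
    refine ⟨?_, hq0⟩
    by_contra! hh
    obtain ⟨x, h0, h1, h2⟩ := huF_gt_ex (r := -q) (by linarith)
    have := h x ⟨h0, h1⟩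
    have e := hu_expr (r := -q) h0 h1
    rw [neg_neg] at e
    rw [e, exp_lt_one_iff] at this
    linarith
  · rintro ⟨ha, hb⟩ x ⟨h0, h1⟩
    have e := hu_expr (r := -q) h0 h1
    rw [neg_neg] at e
    rw [e, exp_lt_one_iff]
    linarith [huF_lt (r := -q) (by linarith) (by linarith) h0 h1]
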